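/- If s ∈ ℂ²⊗ℂ²⊗ℂ² and t ∈ ℂ²⊗ℂ²⊗ℂ² are 3-tensors with rank(s ⊗ t) < rank(s)·rank(t), then both s and t are isomorphic (under GL₂×GL₂×GL₂ acting on the three factors) to the tensor W₃ = b₂⊗b₁⊗b₁ + b₁⊗b₂⊗b₁ + b₁⊗b₁⊗b₂. -/

import Mathlib

open scoped BigOperators

universe u v

noncomputable section

variable {F : Type v}

/-- Tensor rank: the least `r` such that `T` is a sum of `r` simple tensors. -/
def tRank {ι : Type*} [Fintype ι] [DecidableEq ι] {γ : ι → Type*} [∀ i, Fintype (γ i)]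
    [Field F] (T : (∀ i, γ i) → F) : ℕ :=
  sInf {r | ∃ v : Fin r → ∀ i, γ i → F, ∀ x, T x = ∑ j, ∏ i, v j i (x i)}

/-- Tensor product of a `ι`-indexed tensor and a `κ`-indexed tensor (no grouping). -/
def tProd [Field F] {ι κ : Type*} {γ : ι → Type u} {δ : κ → Type u}
    (S : (∀ i, γ i) → F) (T : (∀ j, δ j) → F) : (∀ i : ι ⊕ κ, Sum.elim γ δ i) → F :=
  fun x => S (fun i => x (Sum.inl i)) * T (fun j => x (Sum.inr j))

instance sumElimFintype {ι κ : Type*} {γ : ι → Type u} {δ : κ → Type u}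
    [hγ : ∀ i, Fintype (γ i)] [hδ : ∀ j, Fintype (δ j)] :
    ∀ i : ι ⊕ κ, Fintype (Sum.elim γ δ i)
  | Sum.inl i => hγ i
  | Sum.inr j => hδ j

/-- Tensor Kronecker product of two tensors with the same index set. -/
def tKron [Field F] {ι : Type*} {γ δ : ι → Type*}
    (S : (∀ i, γ i) → F) (T : (∀ i, δ i) → F) : (∀ i, γ i × δ i) → F :=
  fun x => S (fun i => (x i).1) * T (fun i => (x i).2)

/-- `n`-fold tensor product power of a tensor (no grouping), a tensor indexed by `Fin n × ι`. -/
def tPow [Field F] {ι : Type*} {γ : ι → Type*} (T : (∀ i, γ i) → F) (n : ℕ) :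
    (∀ p : Fin n × ι, γ p.2) → F :=
  fun x => ∏ j : Fin n, T (fun i => x (j, i))

/-- Restriction `t ≥ s`: `s` is obtained from `t` by applying linear maps on each factor. -/
def Restricts [Field F] {ι : Type*} [Fintype ι] [DecidableEq ι]
    {γ : ι → Type*} {δ : ι → Type*} [∀ i, Fintype (γ i)]
    (t : (∀ i, γ i) → F) (s : (∀ i, δ i) → F) : Prop :=
  ∃ A : ∀ i, δ i → γ i → F, ∀ x, (∑ y : ∀ i, γ i, (∏ i, A i (x i) (y i)) * t y) = s x

/-- Degeneration `t ⊵_d^e s` with approximation degree `d` and error degree `e`. -/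
def Degen [Field F] {ι : Type*} [Fintype ι] [DecidableEq ι]
    {γ : ι → Type*} {δ : ι → Type*} [∀ i, Fintype (γ i)]
    (t : (∀ i, γ i) → F) (s : (∀ i, δ i) → F) (d e : ℕ) : Prop :=
  ∃ A : ∀ i, δ i → γ i → Polynomial F, ∃ s' : Fin e → ((∀ i, δ i) → F),
    ∀ x, (∑ y : ∀ i, γ i, (∏ i, A i (x i) (y i)) * Polynomial.C (t y)) =
      Polynomial.C (s x) * Polynomial.X ^ d +
      ∑ j : Fin e, Polynomial.C (s' j x) * Polynomial.X ^ (d + 1 + (j : ℕ))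

/-- The rank-`r` order-`k` unit tensor `⟨r⟩_k = ∑_j b_j^{⊗k}`. -/
def unitTensor (F : Type v) [Field F] (r k : ℕ) : (Fin k → Fin r) → F :=
  fun x => ∑ j : Fin r, ∏ i : Fin k, if x i = j then 1 else 0

/-- The tensor `W_k = ∑_{type(i)=(k-1,1)} b_{i₁} ⊗ ⋯ ⊗ b_{i_k}` in `(F²)^{⊗k}`. -/
def Wtensor (F : Type v) [Field F] (k : ℕ) : (Fin k → Fin 2) → F :=
  fun x => if (∑ i, (x i : ℕ)) = 1 then 1 else 0

/-- `R^e(s)`: border rank with error degree at most `e`. -/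
def errRank [Field F] {k : ℕ} {γ : Fin k → Type*} [∀ i, Fintype (γ i)]
    (e : ℕ) (s : (∀ i, γ i) → F) : ℕ :=
  sInf {r | ∃ d, Degen (unitTensor F r k) s d e}

/-- `R_d(s)`: border rank with approximation degree `d`. -/
def degRank [Field F] {k : ℕ} {γ : Fin k → Type*} [∀ i, Fintype (γ i)]
    (d : ℕ) (s : (∀ i, γ i) → F) : ℕ :=
  sInf {r | ∃ e, Degen (unitTensor F r k) s d e}

/-- Border rank over ℂ: the least `r` such that `T` is a limit of tensors of rank `≤ r`. -/
def tBorderRank {ι : Type*} [Fintype ι] [DecidableEq ι] {γ : ι → Type*} [∀ i, Fintype (γ i)]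
    (T : (∀ i, γ i) → ℂ) : ℕ :=
  sInf {r | T ∈ closure {T' : (∀ i, γ i) → ℂ | tRank T' ≤ r}}

end
/-- A 3-tensor in `(ℂ²)^{⊗3}` is isomorphic to `W₃` if invertible linear maps on the
three factors carry it to `W₃`. -/
def IsoW3 (s : (Fin 3 → Fin 2) → ℂ) : Prop :=
  ∃ A : Fin 3 → Matrix (Fin 2) (Fin 2) ℂ, (∀ i, IsUnit (A i).det) ∧
    ∀ x : Fin 3 → Fin 2,
      (∑ y : Fin 3 → Fin 2, (∏ i, A i (x i) (y i)) * s y) = Wtensor ℂ 3 x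

/-!
Over an algebraically closed field, a tensor of format 2 × 2 × 2 is of one of three kinds. If no
contraction along a leg is an invertible matrix, its rank is at most one. Otherwise it restricts to
an EPR pair and is isomorphic to a matrix pencil `(1, Q)` with `Q` singular; then its rank is at
most two, unless `Q` is nilpotent and nonzero, in which case it is isomorphic to `W₃`.

A tensor of rank at most one is multiplicative with any other. Flattening shows that the product of
two EPR pairs has rank at least `2 * 2`, and the product of an EPR pair with `W₃` has rank at least
`2 * 3`, so only products of two tensors isomorphic to `W₃` remain. For the last bound, the product
contains a pencil `(1, N)` with `N * N = 0`. A decomposition into `k` simple tensors gives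
`A * B = 1` and `A * D * B = N` with `D` diagonal of size `k`, after a generic change of basis of
the pencil. Now `A` has full rank and kills `D * B - B * N`, whose rank is at least that of `N`
because `D` has no nilpotent part; hence `k` is at least the size of `N` plus its rank.
-/

open Matrix Kronecker Module

section Rank

variable {F ι κ : Type*} [Field F] [Fintype ι] [Fintype κ]
  {γ : ι → Type u} {δ : κ → Type u}

theorem exists_decomposition_of_weighted [Nonempty ι] {J : Type*} [Fintype J]
    {T : (∀ i, γ i) → F} (c : J → F) (v : J → ∀ i, γ i → F)
    (h : ∀ x, T x = ∑ j, c j * ∏ i, v j i (x i)) :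
    ∃ w : Fin (Fintype.card J) → ∀ i, γ i → F, ∀ x, T x = ∑ j, ∏ i, w j i (x i) := by
  classical
  let e := Fintype.equivFin J
  let i₀ := Classical.arbitrary ι
  refine ⟨fun k i a => (if i = i₀ then c (e.symm k) else 1) * v (e.symm k) i a, fun x => ?_⟩
  rw [h, ← e.symm.sum_comp]
  simp only [Finset.prod_mul_distrib, Finset.prod_ite_eq', Finset.mem_univ, if_true]

variable [DecidableEq ι] [DecidableEq κ] [∀ i, Fintype (γ i)]

theorem tRank_le_card [Nonempty ι] {J : Type*} [Fintype J] {T : (∀ i, γ i) → F}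
    (c : J → F) (v : J → ∀ i, γ i → F) (h : ∀ x, T x = ∑ j, c j * ∏ i, v j i (x i)) :
    tRank T ≤ Fintype.card J :=
  Nat.sInf_le (exists_decomposition_of_weighted c v h)

theorem exists_tRank_decomposition [Nonempty ι] (T : (∀ i, γ i) → F) :
    ∃ v : Fin (tRank T) → ∀ i, γ i → F, ∀ x, T x = ∑ j, ∏ i, v j i (x i) := by
  classical
  refine Nat.sInf_mem (s := {r | ∃ v : Fin r → ∀ i, γ i → F, ∀ x, T x = ∑ j, ∏ i, v j i (x i)})
    ⟨_, exists_decomposition_of_weighted T (fun y i => Pi.single (y i) 1) fun x => ?_⟩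
  have hdelta (y : ∀ i, γ i) :
      ∏ i, (Pi.single (y i) 1 : γ i → F) (x i) = if x = y then 1 else 0 := by
    simp [Pi.single_apply, Finset.prod_ite_zero, funext_iff]
  simp [hdelta]

theorem tRank_zero : tRank (0 : (∀ i, γ i) → F) = 0 :=
  Nat.le_zero.1 (Nat.sInf_le ⟨fun j => j.elim0, fun x => by simp⟩)

theorem exists_tProd_decomposition [Nonempty ι] [∀ k, Fintype (δ k)]
    (s : (∀ i, γ i) → F) (t : (∀ k, δ k) → F) :
    ∃ (U : Fin (tRank (tProd s t)) → ∀ i, γ i → F) (V : Fin (tRank (tProd s t)) → ∀ k, δ k → F),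
      ∀ a b, s a * t b = ∑ j, (∏ i, U j i (a i)) * ∏ k, V j k (b k) := by
  obtain ⟨v, hv⟩ := exists_tRank_decomposition (tProd s t)
  refine ⟨fun j i => v j (Sum.inl i), fun j k => v j (Sum.inr k), fun a b => ?_⟩
  simpa only [tProd, Fintype.prod_sum_type] using hv fun | Sum.inl i => a i | Sum.inr k => b k

theorem tRank_tProd_le_card [Nonempty ι] [∀ k, Fintype (δ k)] {J : Type*} [Fintype J]
    {s : (∀ i, γ i) → F} {t : (∀ k, δ k) → F} (U : J → ∀ i, γ i → F) (V : J → ∀ k, δ k → F)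
    (h : ∀ a b, s a * t b = ∑ j, (∏ i, U j i (a i)) * ∏ k, V j k (b k)) :
    tRank (tProd s t) ≤ Fintype.card J := by
  refine tRank_le_card (fun _ => 1)
    (fun j => fun | Sum.inl i => U j i | Sum.inr k => V j k) fun x => ?_
  simpa only [tProd, one_mul, Fintype.prod_sum_type] using
    h (fun i => x (Sum.inl i)) (fun k => x (Sum.inr k))

theorem tRank_tProd_comm [Nonempty ι] [Nonempty κ] [∀ k, Fintype (δ k)]
    (s : (∀ i, γ i) → F) (t : (∀ k, δ k) → F) : tRank (tProd s t) = tRank (tProd t s) := by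
  apply le_antisymm
  · obtain ⟨U, V, h⟩ := exists_tProd_decomposition t s
    simpa using tRank_tProd_le_card V U fun a b => by simpa only [mul_comm] using h b a
  · obtain ⟨U, V, h⟩ := exists_tProd_decomposition s t
    simpa using tRank_tProd_le_card V U fun a b => by simpa only [mul_comm] using h b a

theorem tRank_right_le_tRank_tProd [Nonempty ι] [Nonempty κ] [∀ k, Fintype (δ k)]
    {s : (∀ i, γ i) → F} (hs : s ≠ 0) (t : (∀ k, δ k) → F) : tRank t ≤ tRank (tProd s t) := by
  obtain ⟨a, ha⟩ := Function.ne_iff.1 hs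
  obtain ⟨U, V, h⟩ := exists_tProd_decomposition s t
  have hcard : tRank t ≤ Fintype.card (Fin (tRank (tProd s t))) :=
    tRank_le_card (fun j => (s a)⁻¹ * ∏ i, U j i (a i)) V fun b => by
      simp only [mul_assoc, ← Finset.mul_sum, ← h]
      exact (inv_mul_cancel_left₀ ha _).symm
  simpa using hcard

theorem tRank_mul_le_tRank_tProd_of_tRank_le_one [Nonempty ι] [Nonempty κ] [∀ k, Fintype (δ k)]
    {s : (∀ i, γ i) → F} (hs : tRank s ≤ 1) (t : (∀ k, δ k) → F) :
    tRank s * tRank t ≤ tRank (tProd s t) := by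
  by_cases hs0 : s = 0
  · simp [hs0, tRank_zero]
  · calc tRank s * tRank t ≤ 1 * tRank t := Nat.mul_le_mul_right _ hs
      _ = tRank t := one_mul _
      _ ≤ tRank (tProd s t) := tRank_right_le_tRank_tProd hs0 t

end Rank

section Action

variable {F ι : Type*} [Field F] [Fintype ι] [DecidableEq ι] {γ γ' γ'' : ι → Type*}
  [∀ i, Fintype (γ i)] [∀ i, Fintype (γ' i)]

/-- The action of a family of matrices, one per leg, on a tensor. -/
def tAct {δ : ι → Type*} (A : ∀ i, Matrix (δ i) (γ i) F) (s : (∀ i, γ i) → F) :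
    (∀ i, δ i) → F :=
  fun x => ∑ y : ∀ i, γ i, (∏ i, A i (x i) (y i)) * s y

theorem restricts_tAct {δ : ι → Type*} (A : ∀ i, Matrix (δ i) (γ i) F) (s : (∀ i, γ i) → F) :
    Restricts s (tAct A s) :=
  ⟨A, fun _ => rfl⟩

theorem tAct_one [∀ i, DecidableEq (γ i)] (s : (∀ i, γ i) → F) : tAct (fun _ => 1) s = s := by
  funext x
  have hdelta (y : ∀ i, γ i) :
      ∏ i, (1 : Matrix (γ i) (γ i) F) (x i) (y i) = if x = y then 1 else 0 := by
    simp [one_apply, Finset.prod_ite_zero, funext_iff]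
  simp [tAct, hdelta]

theorem tAct_tAct (A : ∀ i, Matrix (γ'' i) (γ' i) F) (B : ∀ i, Matrix (γ' i) (γ i) F)
    (s : (∀ i, γ i) → F) : tAct A (tAct B s) = tAct (fun i => A i * B i) s := by
  funext x
  simp only [tAct, mul_apply, Fintype.prod_sum, Finset.prod_mul_distrib, Finset.mul_sum,
    Finset.sum_mul, mul_assoc]
  exact Finset.sum_comm

theorem tAct_apply_of_decomposition {δ : ι → Type*} {J : Type*} [Fintype J] {s : (∀ i, γ i) → F}
    (A : ∀ i, Matrix (δ i) (γ i) F) (c : J → F) (v : J → ∀ i, γ i → F)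
    (h : ∀ y, s y = ∑ j, c j * ∏ i, v j i (y i)) (x : ∀ i, δ i) :
    tAct A s x = ∑ j, c j * ∏ i, (A i *ᵥ v j i) (x i) := by
  simp only [tAct, h, mulVec, dotProduct, Fintype.prod_sum, Finset.mul_sum,
    Finset.prod_mul_distrib]
  rw [Finset.sum_comm]
  simp only [mul_left_comm]

theorem Restricts.tRank_le [Nonempty ι] {s : (∀ i, γ i) → F} {s' : (∀ i, γ' i) → F}
    (h : Restricts s s') : tRank s' ≤ tRank s := by
  obtain ⟨A, hA⟩ := h
  obtain ⟨v, hv⟩ := exists_tRank_decomposition s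
  simpa using tRank_le_card (fun _ => 1) (fun j i => A i *ᵥ v j i) fun x =>
    (hA x).symm.trans (tAct_apply_of_decomposition A _ v (by simpa using hv) x)

theorem Restricts.tRank_tProd_le {ι κ : Type*} [Fintype ι] [DecidableEq ι] [Nonempty ι]
    [Fintype κ] [DecidableEq κ] {γ γ' : ι → Type u} {δ : κ → Type u} [∀ i, Fintype (γ i)]
    [∀ i, Fintype (γ' i)] [∀ k, Fintype (δ k)] {s : (∀ i, γ i) → F} {s' : (∀ i, γ' i) → F}
    (h : Restricts s s') (t : (∀ k, δ k) → F) :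
    tRank (tProd s' t) ≤ tRank (tProd s t) := by
  obtain ⟨A, hA⟩ := h
  obtain ⟨U, V, hUV⟩ := exists_tProd_decomposition s t
  have hdecomp : ∀ a b, s' a * t b = ∑ j, (∏ i, (A i *ᵥ U j i) (a i)) * ∏ k, V j k (b k) := by
    intro a b
    have hb := tAct_apply_of_decomposition A (fun j => ∏ k, V j k (b k)) U
      (s := fun y => s y * t b) (fun y => by simpa only [mul_comm] using hUV y b) a
    rw [← hA a, Finset.sum_mul]
    simpa only [tAct, mul_assoc, mul_comm (∏ k, V _ k (b k))] using hb
  simpa using tRank_tProd_le_card _ V hdecomp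

/-- Two tensors of the same format are isomorphic if invertible matrices acting on the legs carry
the first to the second. -/
def TensorIso [∀ i, DecidableEq (γ i)] (s t : (∀ i, γ i) → F) : Prop :=
  ∃ A : ∀ i, Matrix (γ i) (γ i) F, (∀ i, IsUnit (A i).det) ∧ tAct A s = t

namespace TensorIso

variable [∀ i, DecidableEq (γ i)] {s t u : (∀ i, γ i) → F}

theorem restricts (h : TensorIso s t) : Restricts s t := by
  obtain ⟨A, -, rfl⟩ := h
  exact restricts_tAct A s

theorem symm (h : TensorIso s t) : TensorIso t s := by
  obtain ⟨A, hA, rfl⟩ := h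
  refine ⟨fun i => (A i)⁻¹, fun i => by simpa using hA i, ?_⟩
  simp [tAct_tAct, nonsing_inv_mul _ (hA _), tAct_one]

theorem trans (hst : TensorIso s t) (htu : TensorIso t u) : TensorIso s u := by
  obtain ⟨A, hA, rfl⟩ := hst
  obtain ⟨B, hB, rfl⟩ := htu
  exact ⟨fun i => B i * A i, fun i => by simpa using (hB i).mul (hA i), (tAct_tAct B A s).symm⟩

end TensorIso

end Action

section Slices

/-- The family `p, q, r` placed at the cyclically consecutive legs `i`, `i + 1`, `i + 2`. -/
def cyclicTriple {α : Type*} (i : Fin 3) (p q r : α) : Fin 3 → α :=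
  fun l => ![p, q, r] (l - i)

section CyclicTriple

variable {α : Type*} (i : Fin 3) (p q r : α)

@[simp]
theorem cyclicTriple_self : cyclicTriple i p q r i = p := by
  simp [cyclicTriple]

@[simp]
theorem cyclicTriple_add_one : cyclicTriple i p q r (i + 1) = q := by
  simp [cyclicTriple]

@[simp]
theorem cyclicTriple_add_two : cyclicTriple i p q r (i + 2) = r := by
  simp [cyclicTriple]

theorem forall_fin_three_cyclic {P : Fin 3 → Prop} (h₀ : P i) (h₁ : P (i + 1))
    (h₂ : P (i + 2)) (l : Fin 3) : P l := by
  obtain ⟨k, rfl⟩ : ∃ k, l = i + k := ⟨l - i, by simp⟩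
  fin_cases k
  · simpa using h₀
  · exact h₁
  · exact h₂

theorem cyclicTriple_apply_self (x : Fin 3 → α) :
    cyclicTriple i (x i) (x (i + 1)) (x (i + 2)) = x :=
  funext <| forall_fin_three_cyclic i (by simp) (by simp) (by simp)

theorem prod_fin_three_cyclic {R : Type*} [CommMonoid R] (f : Fin 3 → R) :
    ∏ l, f l = f i * f (i + 1) * f (i + 2) :=
  (Equiv.prod_comp (Equiv.addLeft i) f).symm.trans (by simp [Fin.prod_univ_three])

theorem sum_cyclicTriple [Fintype α] {R : Type*} [AddCommMonoid R] (f : (Fin 3 → α) → R) :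
    ∑ x, f x = ∑ p, ∑ q, ∑ r, f (cyclicTriple i p q r) := by
  let e : (Fin 3 → α) ≃ α × α × α :=
    { toFun x := (x i, x (i + 1), x (i + 2))
      invFun p := cyclicTriple i p.1 p.2.1 p.2.2
      left_inv := cyclicTriple_apply_self i
      right_inv p := by simp }
  rw [← e.symm.sum_comp, Fintype.sum_prod_type]
  simp only [Fintype.sum_prod_type, e, Equiv.coe_fn_symm_mk]

end CyclicTriple

variable {F n : Type*}

/-- The 3-tensor whose `c`-th slice along leg `i` is the matrix `M c`. Legs are numbered cyclically:
the rows and columns of the slices are the legs `i + 1` and `i + 2`. -/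
def ofSlices (i : Fin 3) (M : n → Matrix n n F) : (Fin 3 → n) → F :=
  fun x => M (x i) (x (i + 1)) (x (i + 2))

/-- The slices of a 3-tensor along leg `i`, in the conventions of `ofSlices`. -/
def slices (i : Fin 3) (s : (Fin 3 → n) → F) : n → Matrix n n F :=
  fun c => of fun a b => s (cyclicTriple i c a b)

theorem ofSlices_slices (i : Fin 3) (s : (Fin 3 → n) → F) : ofSlices i (slices i s) = s :=
  funext fun x => congrArg s (cyclicTriple_apply_self i x)

theorem slices_ofSlices (i : Fin 3) (M : n → Matrix n n F) : slices i (ofSlices i M) = M := by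
  funext c
  ext a b
  simp [slices, ofSlices]

variable [Field F] [Fintype n]

theorem tAct_ofSlices (i : Fin 3) (G L R : Matrix n n F) (M : n → Matrix n n F) :
    tAct (cyclicTriple i G L R) (ofSlices i M) =
      ofSlices i fun c => L * (∑ d, G c d • M d) * Rᵀ := by
  have hmul (c : n) : L * (∑ d, G c d • M d) * Rᵀ = ∑ d, G c d • (L * M d * Rᵀ) := by
    simp only [Matrix.mul_sum, Matrix.sum_mul, Matrix.mul_smul, Matrix.smul_mul]
  simp only [hmul]
  funext x
  simp only [tAct, sum_cyclicTriple i, prod_fin_three_cyclic i, ofSlices, cyclicTriple_self,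
    cyclicTriple_add_one, cyclicTriple_add_two, Matrix.sum_apply, Matrix.smul_apply,
    mul_apply, transpose_apply, smul_eq_mul, Finset.mul_sum, Finset.sum_mul]
  refine Finset.sum_congr rfl fun d _ => Finset.sum_comm.trans ?_
  exact Finset.sum_congr rfl fun b _ => Finset.sum_congr rfl fun a _ => by ring

theorem tRank_ofSlices_le_card {J : Type*} [Fintype J] (i : Fin 3) {M : n → Matrix n n F}
    (g u v : J → n → F) (hM : ∀ c, M c = ∑ j, g j c • vecMulVec (u j) (v j)) :
    tRank (ofSlices i M) ≤ Fintype.card J := by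
  refine tRank_le_card (fun _ => 1) (fun j => cyclicTriple i (g j) (u j) (v j)) fun x => ?_
  simp [ofSlices, hM, prod_fin_three_cyclic i, Matrix.sum_apply, vecMulVec_apply, mul_assoc]

variable [DecidableEq n]

theorem TensorIso.ofSlices (i : Fin 3) {G L R : Matrix n n F} (hG : IsUnit G.det)
    (hL : IsUnit L.det) (hR : IsUnit R.det) (M : n → Matrix n n F) :
    TensorIso (ofSlices i M) (ofSlices i fun c => L * (∑ d, G c d • M d) * Rᵀ) :=
  ⟨cyclicTriple i G L R,
    forall_fin_three_cyclic i (by rwa [cyclicTriple_self]) (by rwa [cyclicTriple_add_one])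
      (by rwa [cyclicTriple_add_two]),
    tAct_ofSlices i G L R M⟩

variable (F n) in
/-- The EPR pair `∑ a, b_a ⊗ b_a` shared by the legs `i + 1` and `i + 2`, made into a 3-tensor by
putting the vector `∑ c, b_c` on leg `i`. -/
def eprTensor (i : Fin 3) : (Fin 3 → n) → F :=
  ofSlices i fun _ => (1 : Matrix n n F)

theorem restricts_eprTensor (i : Fin 3) {M : n → Matrix n n F} {f : n → F}
    (hf : IsUnit (∑ c, f c • M c).det) : Restricts (ofSlices i M) (eprTensor F n i) := by
  have h := restricts_tAct (cyclicTriple i (of fun _ => f) (∑ c, f c • M c)⁻¹ 1) (ofSlices i M)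
  simpa only [tAct_ofSlices, of_apply, nonsing_inv_mul _ hf, transpose_one, Matrix.mul_one,
    eprTensor] using h

end Slices

section LowerBounds

variable {F : Type*} [Field F] {n m : Type u} [Fintype n] [Fintype m]

theorem exists_kronecker_decomposition (i j : Fin 3) (M : n → Matrix n n F)
    (M' : m → Matrix m m F) {r : ℕ} (hr : tRank (tProd (ofSlices i M) (ofSlices j M')) = r) :
    ∃ (A : Matrix (n × m) (Fin r) F) (B : Matrix (Fin r) (n × m) F) (z : n → m → Fin r → F),
      ∀ c c', A * diagonal (z c c') * B = M c ⊗ₖ M' c' := by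
  subst hr
  obtain ⟨U, V, h⟩ := exists_tProd_decomposition (ofSlices i M) (ofSlices j M')
  refine ⟨of fun a k => U k (i + 1) a.1 * V k (j + 1) a.2,
    of fun k b => U k (i + 2) b.1 * V k (j + 2) b.2, fun c c' k => U k i c * V k j c',
    fun c c' => ?_⟩
  ext ⟨a, a'⟩ ⟨b, b'⟩
  have hab := h (cyclicTriple i c a b) (cyclicTriple j c' a' b')
  simp only [ofSlices, prod_fin_three_cyclic i (fun l => U _ l _),
    prod_fin_three_cyclic j (fun l => V _ l _), cyclicTriple_self, cyclicTriple_add_one,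
    cyclicTriple_add_two] at hab
  rw [kroneckerMap_apply, hab, mul_apply]
  simp only [mul_diagonal, of_apply]
  exact Finset.sum_congr rfl fun _ _ => by ring

variable [DecidableEq n] [DecidableEq m]

theorem card_mul_card_le_tRank_eprTensor_tProd (i j : Fin 3) :
    Fintype.card n * Fintype.card m ≤ tRank (tProd (eprTensor F n i) (eprTensor F m j)) := by
  cases isEmpty_or_nonempty n
  · simp
  cases isEmpty_or_nonempty m
  · simp
  obtain ⟨A, B, z, h⟩ := exists_kronecker_decomposition i j
    (fun _ : n => (1 : Matrix n n F)) (fun _ : m => (1 : Matrix m m F)) rfl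
  have hAB : A * (diagonal (z (Classical.arbitrary n) (Classical.arbitrary m)) * B) = 1 := by
    rw [← Matrix.mul_assoc, h, one_kronecker_one]
  calc Fintype.card n * Fintype.card m = (1 : Matrix (n × m) (n × m) F).rank := by
        rw [rank_one, Fintype.card_prod]
    _ ≤ A.rank := hAB ▸ rank_mul_le_left A _
    _ ≤ Fintype.card (Fin _) := A.rank_le_card_width
    _ = tRank (tProd (eprTensor F n i) (eprTensor F m j)) := Fintype.card_fin _

end LowerBounds

section SquareZeroPencil

theorem finrank_le_finrank_ker_of_disjoint_map {F V : Type*} [Field F] [AddCommGroup V]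
    [Module F V] [FiniteDimensional F V] {f : V →ₗ[F] V} (hf : f ∘ₗ f = 0) {K : Submodule F V}
    (hK : Disjoint K (K.map f)) : finrank F K ≤ finrank F (LinearMap.ker f) := by
  have hle : (K ⊓ LinearMap.ker f) ⊔ K.map f ≤ LinearMap.ker f := by
    refine sup_le inf_le_right (Submodule.map_le_iff_le_comap.2 fun x _ => ?_)
    exact LinearMap.congr_fun hf x
  have hdisj : (K ⊓ LinearMap.ker f) ⊓ K.map f = ⊥ := (hK.mono_left inf_le_left).eq_bot
  have hker : finrank F (LinearMap.ker (f.domRestrict K)) = finrank F ↥(K ⊓ LinearMap.ker f) := by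
    rw [LinearMap.ker_domRestrict, ← Submodule.map_comap_subtype]
    exact (Submodule.finrank_map_subtype_eq _ _).symm
  calc finrank F K
      = finrank F (LinearMap.range (f.domRestrict K)) +
          finrank F (LinearMap.ker (f.domRestrict K)) :=
        (LinearMap.finrank_range_add_finrank_ker _).symm
    _ = finrank F (K.map f) + finrank F ↥(K ⊓ LinearMap.ker f) := by
        rw [hker, LinearMap.range_domRestrict]
    _ = finrank F ↥((K ⊓ LinearMap.ker f) ⊔ K.map f) := by
        have hadd := Submodule.finrank_sup_add_finrank_inf_eq (K ⊓ LinearMap.ker f) (K.map f)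
        rw [hdisj, finrank_bot] at hadd
        omega
    _ ≤ finrank F (LinearMap.ker f) := Submodule.finrank_mono hle

variable {F m κ : Type*} [Field F] [Fintype m] [DecidableEq m] [Fintype κ] [DecidableEq κ]

theorem disjoint_ker_map_ker_of_mul_eq_one {A : Matrix m κ F} {B : Matrix κ m F} (d : κ → F)
    {N : Matrix m m F} (hAB : A * B = 1) (hN : N * N = 0) :
    Disjoint (LinearMap.ker (diagonal d * B - B * N).mulVecLin)
      ((LinearMap.ker (diagonal d * B - B * N).mulVecLin).map N.mulVecLin) := by
  simp only [Submodule.disjoint_def, Submodule.mem_map, LinearMap.mem_ker, mulVecLin_apply,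
    sub_mulVec, ← mulVec_mulVec, sub_eq_zero]
  rintro _ hNy ⟨y, hy, rfl⟩
  have hsq : diagonal d *ᵥ (diagonal d *ᵥ (B *ᵥ y)) = 0 := by
    rw [hy, hNy, mulVec_mulVec _ N, hN, zero_mulVec, mulVec_zero]
  have hBNy : B *ᵥ (N *ᵥ y) = 0 := by
    rw [← hy]
    ext k
    simpa only [mulVec_diagonal, Pi.zero_apply, mul_eq_zero, or_self_left] using congrFun hsq k
  rw [← one_mulVec (N *ᵥ y), ← hAB, ← mulVec_mulVec, hBNy, mulVec_zero]

theorem card_add_rank_le_of_mul_diagonal_mul {A : Matrix m κ F} {B : Matrix κ m F} {d : κ → F}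
    {N : Matrix m m F} (h₁ : A * B = 1) (h₂ : A * diagonal d * B = N) (hN : N * N = 0) :
    Fintype.card m + N.rank ≤ Fintype.card κ := by
  set E := diagonal d * B - B * N with hE
  have hAE : A * E = 0 := by
    rw [hE, Matrix.mul_sub, ← Matrix.mul_assoc, ← Matrix.mul_assoc, h₁, h₂, Matrix.one_mul,
      sub_self]
  have hA : Fintype.card m ≤ A.rank := by
    simpa [h₁] using rank_mul_le_left A B
  have hNE : N.rank ≤ E.rank := by
    have hker : finrank F (LinearMap.ker E.mulVecLin) ≤ finrank F (LinearMap.ker N.mulVecLin) :=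
      finrank_le_finrank_ker_of_disjoint_map (by rw [← mulVecLin_mul, hN, mulVecLin_zero])
        (disjoint_ker_map_ker_of_mul_eq_one d h₁ hN)
    have hN_add := LinearMap.finrank_range_add_finrank_ker N.mulVecLin
    have hE_add := LinearMap.finrank_range_add_finrank_ker E.mulVecLin
    rw [Matrix.rank, Matrix.rank]
    omega
  have hAE_rank := rank_add_rank_le_card_of_mul_eq_zero hAE
  omega

theorem card_add_rank_le_of_pencil [Infinite F] {A : Matrix m κ F} {B : Matrix κ m F}
    {α β : κ → F} {N : Matrix m m F} (h₁ : A * diagonal α * B = 1)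
    (h₂ : A * diagonal β * B = N) (hN : N * N = 0) :
    Fintype.card m + N.rank ≤ Fintype.card κ := by
  classical
  -- For generic `c`, the diagonal `β` vanishes wherever `α + c • β` does.
  obtain ⟨c, hc⟩ := Infinite.exists_notMem_finset (Finset.univ.image fun j => - α j / β j)
  have hβ (j) (hj : α j + c * β j = 0) : β j = 0 := by
    by_contra hb
    refine hc (Finset.mem_image.2 ⟨j, Finset.mem_univ j, ?_⟩)
    rw [div_eq_iff hb]
    linear_combination -hj
  have hsum : A * diagonal (α + c • β) * B = 1 + c • N := by
    have hadd : diagonal (α + c • β) = diagonal α + c • diagonal β := by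
      rw [← diagonal_smul]
      exact (diagonal_add α (c • β)).symm
    rw [hadd, Matrix.mul_add, Matrix.add_mul, h₁, Matrix.mul_smul, Matrix.smul_mul, h₂]
  have hdiag : diagonal (α + c • β) * diagonal (β / (α + c • β)) = diagonal β := by
    rw [diagonal_mul_diagonal]
    congr 1
    ext j
    exact mul_div_cancel_of_imp' (hβ j)
  apply card_add_rank_le_of_mul_diagonal_mul
    (A := (1 - c • N) * A * diagonal (α + c • β)) (B := B) (d := β / (α + c • β)) _ _ hN
  · calc (1 - c • N) * A * diagonal (α + c • β) * B
        = (1 - c • N) * (A * diagonal (α + c • β) * B) := by simp only [Matrix.mul_assoc]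
      _ = 1 := by simp [hsum, Matrix.sub_mul, Matrix.mul_add, hN]
  · calc (1 - c • N) * A * diagonal (α + c • β) * diagonal (β / (α + c • β)) * B
        = (1 - c • N) * (A * (diagonal (α + c • β) * diagonal (β / (α + c • β))) * B) := by
          simp only [Matrix.mul_assoc]
      _ = N := by simp [hdiag, h₂, Matrix.sub_mul, hN]

end SquareZeroPencil

section EprW

variable {F : Type*} [Field F]

theorem Wtensor_eq_ofSlices (i : Fin 3) :
    Wtensor F 3 = ofSlices i ![!![0, 1; 1, 0], !![1, 0; 0, 0]] := by
  funext x
  have hsum : ∑ l, (x l : ℕ) = x i + x (i + 1) + x (i + 2) :=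
    (Equiv.sum_comp (Equiv.addLeft i) fun l => (x l : ℕ)).symm.trans
      (by simp [Fin.sum_univ_three])
  simp only [Wtensor, ofSlices, hsum]
  generalize x i = c, x (i + 1) = a, x (i + 2) = b
  fin_cases c <;> fin_cases a <;> fin_cases b <;> simp

theorem card_le_rank_one_kronecker {n m : Type*} [Fintype n] [DecidableEq n] [Fintype m]
    {N : Matrix m m F} (hN : N ≠ 0) :
    Fintype.card n ≤ ((1 : Matrix n n F) ⊗ₖ N).rank := by
  classical
  obtain ⟨a, b, hab⟩ : ∃ a b, N a b ≠ 0 := by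
    by_contra! h
    exact hN (ext h)
  have hsub : ((1 : Matrix n n F) ⊗ₖ N).submatrix (fun x => (x, a)) (fun x => (x, b)) =
      diagonal fun _ => N a b := by
    ext x y
    simp [one_apply, diagonal_apply]
  calc Fintype.card n = (diagonal fun _ : n => N a b).rank := by
        simp [rank_diagonal, hab]
    _ = (((1 : Matrix n n F) ⊗ₖ N).submatrix (fun x => (x, a)) (fun x => (x, b))).rank := by
        rw [hsub]
    _ ≤ _ := rank_submatrix_le _ _ _

theorem three_mul_card_le_tRank_eprTensor_tProd_Wtensor [Infinite F] {n : Type} [Fintype n]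
    [DecidableEq n] (i : Fin 3) :
    3 * Fintype.card n ≤ tRank (tProd (eprTensor F n i) (Wtensor F 3)) := by
  cases isEmpty_or_nonempty n
  · simp
  generalize hr : tRank (tProd (eprTensor F n i) (Wtensor F 3)) = r
  rw [Wtensor_eq_ofSlices 0] at hr
  obtain ⟨A, B, z, h⟩ := exists_kronecker_decomposition i 0 (fun _ => (1 : Matrix n n F)) _ hr
  let σ : Matrix (n × Fin 2) (n × Fin 2) F := 1 ⊗ₖ !![0, 1; 1, 0]
  let c := Classical.arbitrary n
  have hN : (!![0, 0; 1, 0] : Matrix (Fin 2) (Fin 2) F) * !![0, 0; 1, 0] = 0 := by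
    rw [mul_fin_two]
    ext a b
    fin_cases a <;> fin_cases b <;> simp
  have hrank : Fintype.card n ≤ ((1 : Matrix n n F) ⊗ₖ !![0, 0; 1, (0 : F)]).rank :=
    card_le_rank_one_kronecker fun h => by simpa using congrFun₂ h 1 0
  have h₁ : σ * A * diagonal (z c 0) * B = 1 := by
    rw [Matrix.mul_assoc, Matrix.mul_assoc, ← Matrix.mul_assoc A, h, ← mul_kronecker_mul]
    simp [one_fin_two.symm]
  have h₂ : σ * A * diagonal (z c 1) * B = 1 ⊗ₖ !![0, 0; 1, 0] := by
    rw [Matrix.mul_assoc, Matrix.mul_assoc, ← Matrix.mul_assoc A, h, ← mul_kronecker_mul]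
    simp
  have hpencil := card_add_rank_le_of_pencil h₁ h₂ (by simp [← mul_kronecker_mul, hN])
  simp only [Fintype.card_prod, Fintype.card_fin] at hpencil
  omega

end EprW

section TwoByTwo

variable {F : Type*} [Field F]

theorem exists_eq_vecMulVec_of_det_eq_zero {M : Matrix (Fin 2) (Fin 2) F} (hM : M.det = 0) :
    ∃ u v, M = vecMulVec u v := by
  have hminor : ∀ a b a' b', M a b * M a' b' = M a b' * M a' b := by
    rw [det_fin_two] at hM
    simp only [Fin.forall_fin_two]
    grind
  by_cases hz : ∃ a b, M a b ≠ 0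
  · obtain ⟨a, b, hab⟩ := hz
    refine ⟨fun a' => M a' b, fun b' => M a b' / M a b, ?_⟩
    ext a' b'
    rw [vecMulVec_apply, mul_div_assoc', eq_div_iff hab]
    exact hminor a' b' a b
  · push Not at hz
    exact ⟨0, 0, by ext a b; simp [hz]⟩

theorem det_one_sub_smul_fin_two (c : F) (Q : Matrix (Fin 2) (Fin 2) F) :
    (1 - c • Q).det = 1 - c * Q.trace + c ^ 2 * Q.det := by
  simp only [det_fin_two, trace_fin_two, Matrix.sub_apply, Matrix.smul_apply, smul_eq_mul,
    one_apply_eq, one_apply_ne zero_ne_one, one_apply_ne one_ne_zero]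
  ring

theorem exists_mul_eq_mul_of_trace_eq_zero_of_det_eq_zero {Q : Matrix (Fin 2) (Fin 2) F}
    (hQ : Q ≠ 0) (htr : Q.trace = 0) (hdet : Q.det = 0) :
    ∃ S : Matrix (Fin 2) (Fin 2) F, IsUnit S.det ∧ Q * S = S * !![0, 0; 1, 0] := by
  rw [trace_fin_two] at htr
  rw [det_fin_two] at hdet
  by_cases h₁₀ : Q 1 0 = 0
  · have h₀₀ : Q 0 0 = 0 := by grind
    have h₁₁ : Q 1 1 = 0 := by grind
    have h₀₁ : Q 0 1 ≠ 0 := fun h₀₁ => hQ <| by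
      ext a b
      fin_cases a <;> fin_cases b <;> assumption
    refine ⟨!![0, Q 0 1; 1, 0], by simpa using h₀₁, ?_⟩
    rw [eta_fin_two Q, h₀₀, h₁₀, h₁₁]
    ext a b
    fin_cases a <;> fin_cases b <;> simp
  · refine ⟨!![1, Q 0 0; 0, Q 1 0], by simpa using h₁₀, ?_⟩
    ext a b
    fin_cases a <;> fin_cases b <;> simp [mul_apply] <;> grind

theorem tRank_ofSlices_le_card_of_det_eq_zero {J : Type*} [Fintype J] (i : Fin 3)
    {M : Fin 2 → Matrix (Fin 2) (Fin 2) F} (g : J → Fin 2 → F)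
    (R : J → Matrix (Fin 2) (Fin 2) F) (hR : ∀ j, (R j).det = 0)
    (hM : ∀ c, M c = ∑ j, g j c • R j) : tRank (ofSlices i M) ≤ Fintype.card J := by
  choose u v huv using fun j => exists_eq_vecMulVec_of_det_eq_zero (hR j)
  exact tRank_ofSlices_le_card i g u v (by simpa only [← huv] using hM)

theorem tRank_Wtensor_le_three : tRank (Wtensor F 3) ≤ 3 := by
  rw [Wtensor_eq_ofSlices 0]
  refine tRank_ofSlices_le_card_of_det_eq_zero 0 ![![1, 0], ![1, 0], ![0, 1]]
    ![!![0, 1; 0, 0], !![0, 0; 1, 0], !![1, 0; 0, 0]] ?_ ?_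
  · intro j
    fin_cases j <;> simp
  · intro c
    fin_cases c <;> simp [Fin.sum_univ_three]

theorem tRank_ofSlices_one_zero_le_two (i : Fin 3) :
    tRank (ofSlices i ![1, (0 : Matrix (Fin 2) (Fin 2) F)]) ≤ 2 := by
  refine tRank_ofSlices_le_card_of_det_eq_zero i (fun _ => ![1, 0])
    ![!![1, 0; 0, 0], !![0, 0; 0, 1]] ?_ ?_
  · intro j
    fin_cases j <;> simp
  · intro c
    fin_cases c <;> simp [one_fin_two]

theorem tRank_ofSlices_one_le_two (i : Fin 3) {Q : Matrix (Fin 2) (Fin 2) F}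
    (htr : Q.trace ≠ 0) (hdet : Q.det = 0) : tRank (ofSlices i ![1, Q]) ≤ 2 := by
  refine tRank_ofSlices_le_card_of_det_eq_zero i ![![Q.trace⁻¹, 1], ![1, 0]]
    ![Q, 1 - Q.trace⁻¹ • Q] ?_ ?_
  · intro j
    fin_cases j
    · exact hdet
    · simp [det_one_sub_smul_fin_two, hdet, htr]
  · intro c
    fin_cases c <;> simp

theorem tensorIso_ofSlices_one_Wtensor (i : Fin 3) {Q : Matrix (Fin 2) (Fin 2) F} (hQ : Q ≠ 0)
    (htr : Q.trace = 0) (hdet : Q.det = 0) : TensorIso (ofSlices i ![1, Q]) (Wtensor F 3) := by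
  obtain ⟨S, hS, hQS⟩ := exists_mul_eq_mul_of_trace_eq_zero_of_det_eq_zero hQ htr hdet
  have hL : IsUnit (!![0, 1; 1, 0] * S⁻¹).det := by
    rw [det_mul]
    exact IsUnit.mul (by simp) (isUnit_nonsing_inv_det S hS)
  have hiso := TensorIso.ofSlices i (G := 1) (R := Sᵀ) (by simp) hL (by rwa [det_transpose]) ![1, Q]
  rw [Wtensor_eq_ofSlices i]
  convert hiso using 2
  funext c
  fin_cases c
  · simp [one_apply, nonsing_inv_mul _ hS]
  · simp [one_apply, Matrix.mul_assoc, hQS, nonsing_inv_mul_cancel_left _ _ hS]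

theorem exists_tensorIso_ofSlices_one [IsAlgClosed F] (i : Fin 3)
    {M : Fin 2 → Matrix (Fin 2) (Fin 2) F} {f : Fin 2 → F} (hf : IsUnit (∑ c, f c • M c).det) :
    ∃ Q : Matrix (Fin 2) (Fin 2) F, Q.det = 0 ∧
      TensorIso (ofSlices i M) (ofSlices i ![1, Q]) := by
  set P := ∑ c, f c • M c with hP
  obtain ⟨e, he⟩ : ∃ e : Fin 2 → F, f 0 * e 1 - f 1 * e 0 ≠ 0 := by
    by_contra! h
    have h₀ : f 0 = 0 := by simpa using h ![0, 1]
    have h₁ : f 1 = 0 := by simpa using h ![1, 0]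
    exact hf.ne_zero (by simp [hP, h₀, h₁])
  obtain ⟨μ, hμ⟩ := spectrum.nonempty_of_isAlgClosed_of_finiteDimensional F
    (P⁻¹ * ∑ c, e c • M c)
  refine ⟨P⁻¹ * (∑ c, e c • M c) - μ • 1, ?_, ?_⟩
  · rw [spectrum.mem_iff, isUnit_iff_isUnit_det, isUnit_iff_ne_zero, not_not,
      Algebra.algebraMap_eq_smul_one] at hμ
    rw [← neg_sub, det_neg, hμ, mul_zero]
  · have hG : IsUnit (of ![f, e - μ • f]).det := by
      rw [isUnit_iff_ne_zero, det_fin_two]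
      convert he using 1
      change f 0 * (e 1 - μ * f 1) - f 1 * (e 0 - μ * f 0) = _
      ring
    have hsum : ∑ c, (e - μ • f) c • M c = ∑ c, e c • M c - μ • P := by
      simp only [hP, Finset.smul_sum, ← Finset.sum_sub_distrib, Pi.sub_apply, Pi.smul_apply,
        sub_smul, smul_assoc]
    convert TensorIso.ofSlices i (L := P⁻¹) (R := 1) hG (by simpa using hf) (by simp) M using 2
    funext c
    fin_cases c
    · simpa [← hP] using (nonsing_inv_mul P hf).symm
    · simp only [of_apply, transpose_one, Matrix.mul_one]
      change _ = P⁻¹ * ∑ c, (e - μ • f) c • M c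
      rw [hsum, Matrix.mul_sub, Matrix.mul_smul, nonsing_inv_mul P hf]
      rfl

end TwoByTwo

section Classification

variable {F : Type*} [Field F]

theorem exists_eq_ofSlices_smul {s : (Fin 3 → Fin 2) → F}
    (h : ∀ f : Fin 2 → F, (∑ c, f c • slices 0 s c).det = 0) :
    ∃ (i : Fin 3) (u : Fin 2 → F) (N : Matrix (Fin 2) (Fin 2) F),
      s = ofSlices i fun c => u c • N := by
  have hdet (c : Fin 2) : (slices 0 s c).det = 0 := by
    simpa [Pi.single_apply] using h (Pi.single c 1)
  choose u v huv using fun c => exists_eq_vecMulVec_of_det_eq_zero (hdet c)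
  have hs (x : Fin 3 → Fin 2) : s x = u (x 0) (x 1) * v (x 0) (x 2) := by
    rw [← vecMulVec_apply, ← huv]
    exact congrFun (ofSlices_slices 0 s).symm x
  have hsum : (of u)ᵀ * of v = ∑ c, (1 : F) • slices 0 s c := by
    ext a b
    simp [mul_apply, huv, vecMulVec_apply]
  have huv_det : (of u).det * (of v).det = 0 := by
    rw [← det_transpose (of u), ← det_mul, hsum, h]
  rcases mul_eq_zero.1 huv_det with hu | hv
  · obtain ⟨p, w, hpw⟩ := exists_eq_vecMulVec_of_det_eq_zero hu
    have hu' (c a) : u c a = p c * w a := congrFun₂ hpw c a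
    refine ⟨1, w, of fun b c => p c * v c b, funext fun x => ?_⟩
    calc s x = p (x 0) * w (x 1) * v (x 0) (x 2) := by rw [hs, hu']
      _ = w (x 1) * (p (x 0) * v (x 0) (x 2)) := by ring
  · obtain ⟨p, w, hpw⟩ := exists_eq_vecMulVec_of_det_eq_zero hv
    have hv' (c b) : v c b = p c * w b := congrFun₂ hpw c b
    refine ⟨2, w, of fun c a => u c a * p c, funext fun x => ?_⟩
    calc s x = u (x 0) (x 1) * (p (x 0) * w (x 2)) := by rw [hs, hv']
      _ = w (x 2) * (u (x 0) (x 1) * p (x 0)) := by ring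

theorem tRank_le_one_of_forall_det_eq_zero {s : (Fin 3 → Fin 2) → F}
    (h : ∀ (i : Fin 3) (f : Fin 2 → F), (∑ c, f c • slices i s c).det = 0) : tRank s ≤ 1 := by
  obtain ⟨i, u, N, rfl⟩ := exists_eq_ofSlices_smul (h 0)
  by_cases hu : u = 0
  · simpa [hu] using tRank_ofSlices_le_card_of_det_eq_zero (F := F) i (J := Fin 1) 0 0 (by simp)
      fun _ => rfl
  · obtain ⟨c, hc : u c ≠ 0⟩ := Function.ne_iff.1 hu
    have hN : N.det = 0 := by
      simpa [slices_ofSlices, Pi.single_apply, det_smul, hc] using h i (Pi.single c 1)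
    simpa using tRank_ofSlices_le_card_of_det_eq_zero i (J := Fin 1) (fun _ => u) (fun _ => N)
      (fun _ => hN) (by simp)

theorem tRank_le_one_or_restricts_eprTensor_or_tensorIso_Wtensor [IsAlgClosed F]
    (s : (Fin 3 → Fin 2) → F) :
    tRank s ≤ 1 ∨ (tRank s ≤ 2 ∧ ∃ i, Restricts s (eprTensor F (Fin 2) i)) ∨
      TensorIso s (Wtensor F 3) := by
  by_cases hs : ∀ (i : Fin 3) (f : Fin 2 → F), (∑ c, f c • slices i s c).det = 0
  · exact .inl (tRank_le_one_of_forall_det_eq_zero hs)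
  push Not at hs
  obtain ⟨i, f, hf⟩ := hs
  obtain ⟨Q, hdet, hiso⟩ := exists_tensorIso_ofSlices_one i hf.isUnit
  have hepr := restricts_eprTensor i hf.isUnit
  rw [ofSlices_slices] at hiso hepr
  right
  by_cases htr : Q.trace = 0
  · by_cases hQ : Q = 0
    · subst hQ
      exact .inl ⟨hiso.symm.restricts.tRank_le.trans (tRank_ofSlices_one_zero_le_two i), i, hepr⟩
    · exact .inr (hiso.trans (tensorIso_ofSlices_one_Wtensor i hQ htr hdet))
  · exact .inl ⟨hiso.symm.restricts.tRank_le.trans (tRank_ofSlices_one_le_two i htr hdet), i, hepr⟩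

end Classification

section Multiplicativity

variable {F : Type*} [Field F] [IsAlgClosed F] {s t : (Fin 3 → Fin 2) → F}

theorem tRank_mul_le_tRank_tProd_of_restricts_eprTensor {i : Fin 3} (hs : tRank s ≤ 2)
    (hepr : Restricts s (eprTensor F (Fin 2) i)) : tRank s * tRank t ≤ tRank (tProd s t) := by
  have : Infinite F := IsAlgClosed.instInfinite
  rcases tRank_le_one_or_restricts_eprTensor_or_tensorIso_Wtensor t with
    ht | ⟨ht, j, hj⟩ | ht
  · rw [mul_comm, tRank_tProd_comm]
    exact tRank_mul_le_tRank_tProd_of_tRank_le_one ht s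
  · calc tRank s * tRank t ≤ 2 * 2 := Nat.mul_le_mul hs ht
      _ ≤ tRank (tProd (eprTensor F (Fin 2) j) (eprTensor F (Fin 2) i)) := by
        simpa using card_mul_card_le_tRank_eprTensor_tProd (F := F) (n := Fin 2) (m := Fin 2) j i
      _ ≤ tRank (tProd t (eprTensor F (Fin 2) i)) := hj.tRank_tProd_le _
      _ = tRank (tProd (eprTensor F (Fin 2) i) t) := tRank_tProd_comm _ _
      _ ≤ tRank (tProd s t) := hepr.tRank_tProd_le t
  · calc tRank s * tRank t ≤ 2 * 3 :=
        Nat.mul_le_mul hs (ht.symm.restricts.tRank_le.trans tRank_Wtensor_le_three)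
      _ ≤ tRank (tProd (eprTensor F (Fin 2) i) (Wtensor F 3)) := by
        simpa using three_mul_card_le_tRank_eprTensor_tProd_Wtensor (F := F) (n := Fin 2) i
      _ = tRank (tProd (Wtensor F 3) (eprTensor F (Fin 2) i)) := tRank_tProd_comm _ _
      _ ≤ tRank (tProd t (eprTensor F (Fin 2) i)) := ht.restricts.tRank_tProd_le _
      _ = tRank (tProd (eprTensor F (Fin 2) i) t) := tRank_tProd_comm _ _
      _ ≤ tRank (tProd s t) := hepr.tRank_tProd_le t

theorem tensorIso_Wtensor_of_tRank_tProd_lt (h : tRank (tProd s t) < tRank s * tRank t) :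
    TensorIso s (Wtensor F 3) := by
  rcases tRank_le_one_or_restricts_eprTensor_or_tensorIso_Wtensor s with
    hs | ⟨hs, i, hepr⟩ | hs
  · exact absurd (tRank_mul_le_tRank_tProd_of_tRank_le_one hs t) h.not_ge
  · exact absurd (tRank_mul_le_tRank_tProd_of_restricts_eprTensor hs hepr) h.not_ge
  · exact hs

end Multiplicativity

theorem not_mult_implies_W3_general {F : Type*} [Field F] [IsAlgClosed F]
    (s t : (Fin 3 → Fin 2) → F) (h : tRank (tProd s t) < tRank s * tRank t) :
    TensorIso s (Wtensor F 3) ∧ TensorIso t (Wtensor F 3) :=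
  ⟨tensorIso_Wtensor_of_tRank_tProd_lt h,
    tensorIso_Wtensor_of_tRank_tProd_lt (by rwa [tRank_tProd_comm, mul_comm])⟩

/-- if `s, t ∈ ℂ²⊗ℂ²⊗ℂ²` satisfy `rank(s ⊗ t) < rank(s)·rank(t)`, then
both `s` and `t` are isomorphic to `W₃`. -/
theorem not_mult_implies_W3 (s t : (Fin 3 → Fin 2) → ℂ)
    (h : tRank (tProd s t) < tRank s * tRank t) :
    IsoW3 s ∧ IsoW3 t := by
  obtain ⟨⟨A, hA, hs⟩, B, hB, ht⟩ := not_mult_implies_W3_general s t h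
  exact ⟨⟨A, hA, congrFun hs⟩, B, hB, congrFun ht⟩
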